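/- arXiv:1603.06069 — 6 statements merged into one kernel-verified Lean document; each statement's English description precedes it below -/
import Mathlib

section
/- Let N = n₁ + ⋯ + n_r. Suppose P is a monic real polynomial of degree N satisfying the multiple orthogonality conditions ∫ P(x) x^k dμ_j(x) = 0 for all 0 ≤ k ≤ n_j − 1 and all 1 ≤ j ≤ r, and suppose P has N distinct real zeros x₁ < x₂ < ⋯ < x_N. Define the quadrature weights λ_k^{(j)} = ∫ ℓ_k(x) dμ_j(x), where ℓ_k is the k-th fundamental Lagrange polynomial for the nodes x₁,…,x_N. Then for every j ∈ {1,…,r} and every real polynomial p of degree ≤ N + n_j − 1, one has ∑_{k=1}^{N} λ_k^{(j)} p(x_k) = ∫ p(x) dμ_j(x). -/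
open MeasureTheory

/-- **Simultaneous quadrature from multiple orthogonality.**
If `P` is a monic real polynomial of degree `N = n₁ + ⋯ + n_r` satisfying the multiple
orthogonality conditions `∫ P(x) xᵏ dμⱼ(x) = 0` for `0 ≤ k ≤ nⱼ − 1`, and `P` has `N`
distinct real zeros `x₁ < ⋯ < x_N`, then the interpolatory quadrature rule with weights
`λ_k^{(j)} = ∫ ℓ_k dμⱼ` (where `ℓ_k` is the `k`-th fundamental Lagrange polynomial for
the nodes) is exact for every polynomial of degree at most `N + nⱼ − 1`. -/
theorem simultaneous_quadrature_exactness
    (r : ℕ) (hr : 1 ≤ r)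
    (μ : Fin r → Measure ℝ) [∀ j, IsFiniteMeasure (μ j)]
    (hmom : ∀ j, ∀ k : ℕ, Integrable (fun t : ℝ => t ^ k) (μ j))
    (n : Fin r → ℕ) (hn : ∀ j, 1 ≤ n j)
    (N : ℕ) (hN : N = ∑ j, n j)
    (P : Polynomial ℝ) (hPmonic : P.Monic) (hPdeg : P.natDegree = N)
    (horth : ∀ j, ∀ k < n j, ∫ t, P.eval t * t ^ k ∂(μ j) = 0)
    (x : Fin N → ℝ) (hmono : StrictMono x) (hroot : ∀ i, P.eval (x i) = 0)
    (w : Fin r → Fin N → ℝ)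
    (hw : ∀ j i, w j i = ∫ t, (Lagrange.basis Finset.univ x i).eval t ∂(μ j)) :
    ∀ j, ∀ p : Polynomial ℝ, p.natDegree ≤ N + n j - 1 →
      ∑ i, w j i * p.eval (x i) = ∫ t, p.eval t ∂(μ j) := by
  intro j p hp
  have hint : ∀ q : Polynomial ℝ, Integrable (fun t => q.eval t) (μ j) := by
    intro q
    simp_rw [Polynomial.eval_eq_sum_range]
    exact integrable_finsetSum _ fun k _ => (hmom j k).const_mul _
  have hdecomp : p %ₘ P + P * (p /ₘ P) = p := Polynomial.modByMonic_add_div p P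
  set R := p %ₘ P with hR
  set Q := p /ₘ P with hQ
  have hQdeg : Q.natDegree < n j := by
    rw [hQ, Polynomial.natDegree_divByMonic p hPmonic, hPdeg]
    have := hn j
    omega
  have hPQ : ∫ t, (P * Q).eval t ∂(μ j) = 0 := by
    have h1 : ∀ t : ℝ, (P * Q).eval t =
        ∑ k ∈ Finset.range (n j), Q.coeff k * (P.eval t * t ^ k) := by
      intro t
      rw [Polynomial.eval_mul, Polynomial.eval_eq_sum_range' hQdeg, Finset.mul_sum]
      exact Finset.sum_congr rfl fun k _ => by ring
    simp_rw [h1]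
    rw [integral_finsetSum]
    · refine Finset.sum_eq_zero fun k hk => ?_
      rw [integral_const_mul, horth j k (Finset.mem_range.1 hk), mul_zero]
    · intro k _
      have := hint (P * Polynomial.X ^ k)
      simp only [Polynomial.eval_mul, Polynomial.eval_pow, Polynomial.eval_X] at this
      exact this.const_mul _
  have hRdeg : R.degree < (Finset.univ : Finset (Fin N)).card := by
    have h := Polynomial.degree_modByMonic_lt p hPmonic
    rw [Polynomial.degree_eq_natDegree hPmonic.ne_zero, hPdeg] at h
    simpa using h
  have hRint := Lagrange.eq_interpolate (hmono.injective.injOn) hRdeg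
  have hval : ∀ i, p.eval (x i) = R.eval (x i) := by
    intro i
    conv_lhs => rw [← hdecomp]
    simp [hroot i]
  have hRt : ∀ t, R.eval t =
      ∑ i, R.eval (x i) * (Lagrange.basis Finset.univ x i).eval t := by
    intro t
    conv_lhs => rw [hRint]
    simp [Lagrange.interpolate_apply, Polynomial.eval_finset_sum]
  have hRI : ∫ t, R.eval t ∂(μ j) = ∑ i, w j i * R.eval (x i) := by
    rw [integral_congr_ae (Filter.Eventually.of_forall hRt), integral_finsetSum]
    · refine Finset.sum_congr rfl fun i _ => ?_
      rw [integral_const_mul, hw, mul_comm]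
    · intro i _
      exact (hint _).const_mul _
  calc ∑ i, w j i * p.eval (x i) = ∑ i, w j i * R.eval (x i) := by simp_rw [hval]
    _ = ∫ t, R.eval t ∂(μ j) + ∫ t, (P * Q).eval t ∂(μ j) := by rw [hPQ, hRI, add_zero]
    _ = ∫ t, (R.eval t + (P * Q).eval t) ∂(μ j) := (integral_add (hint _) (hint _)).symm
    _ = ∫ t, p.eval t ∂(μ j) := by
      conv_rhs => rw [← hdecomp]
      simp only [Polynomial.eval_add]
end

section
/- For every j ∈ {1,…,r} and every k with x_{k,rn} ∈ [a_j,b_j], the quadrature weight λ_{k,rn}^{(j)} is strictly positive. -/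
open MeasureTheory

lemma aux_integrable (μ : Measure ℝ) (hmom : ∀ k : ℕ, Integrable (fun t : ℝ => t ^ k) μ)
    (p : Polynomial ℝ) : Integrable (fun t => p.eval t) μ := by
  simp only [Polynomial.eval_eq_sum_range]
  exact integrable_finsetSum _ fun k _ => (hmom k).const_mul _

/-- **Positivity of the quadrature weights at the nodes of their own interval**
(Angelesco system with `r` disjoint intervals).
The nodes are the zeros of the diagonal type II multiple orthogonal polynomial,
with exactly `n` simple zeros `x j 0 < ⋯ < x j (n-1)` in each interval `(a j, b j)`.
For every `j`, the quadrature weight of the `j`-th rule at any node lying in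
`[a j, b j]` is strictly positive. -/
theorem angelesco_weights_positive_on_own_interval
    (r n : ℕ) (hr : 1 ≤ r) (hn : 1 ≤ n)
    (μ : Fin r → Measure ℝ) [∀ j, IsFiniteMeasure (μ j)]
    (hmom : ∀ j, ∀ k : ℕ, Integrable (fun t : ℝ => t ^ k) (μ j))
    (a b : Fin r → ℝ) (hab : ∀ j, a j < b j)
    (hord : ∀ j k : Fin r, j < k → b j ≤ a k)
    (hsupp : ∀ j, (μ j) (Set.Icc (a j) (b j))ᶜ = 0)
    (hinf : ∀ j, ∀ s : Finset ℝ, (μ j) ((s : Set ℝ))ᶜ ≠ 0)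
    (x : Fin r → Fin n → ℝ) (hmono : ∀ j, StrictMono (x j))
    (hmem : ∀ j i, x j i ∈ Set.Ioo (a j) (b j))
    (horth : ∀ j, ∀ k < n,
      ∫ t, (∏ p : Fin r × Fin n, (t - x p.1 p.2)) * t ^ k ∂(μ j) = 0)
    (w : Fin r → Fin r × Fin n → ℝ)
    (hw : ∀ j p, w j p =
      ∫ t, (Lagrange.basis Finset.univ (fun q : Fin r × Fin n => x q.1 q.2) p).eval t ∂(μ j)) :
    ∀ j : Fin r, ∀ i : Fin n, 0 < w j (j, i) := by
  intro j i
  classical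
  set v : Fin r × Fin n → ℝ := fun q => x q.1 q.2 with hv
  set L := Lagrange.basis Finset.univ v (j, i) with hL
  set M := Lagrange.basis Finset.univ (x j) i with hM
  have hvinj : ∀ q : Fin r × Fin n, q ≠ (j, i) → v (j, i) - v q ≠ 0 := by
    rintro ⟨k, m⟩ hq h0
    have h1 : x j i = x k m := sub_eq_zero.mp h0
    have h2 := hmem j i
    have h3 := hmem k m
    rw [← h1] at h3
    rcases lt_trichotomy j k with h | h | h
    · have := hord _ _ h
      linarith [h2.2, h3.1]
    · subst h
      exact hq (by rw [(hmono j).injective h1])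
    · have := hord _ _ h
      linarith [h3.2, h2.1]
  have hMinj : Set.InjOn (x j) (Finset.univ : Finset (Fin n)) := (hmono j).injective.injOn
  have hMi : M.eval (x j i) = 1 :=
    Lagrange.eval_basis_self hMinj (Finset.mem_univ i)
  have hMdeg : M.natDegree = n - 1 := by
    have := Lagrange.natDegree_basis hMinj (Finset.mem_univ i)
    simpa using this
  have hLev : ∀ t, L.eval t = ∏ q ∈ Finset.univ.erase (j, i), ((v (j, i) - v q)⁻¹ * (t - v q)) := by
    intro t
    simp [hL, Lagrange.basis, Lagrange.basisDivisor, Polynomial.eval_prod]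
  have hMev : ∀ t, M.eval t = ∏ m ∈ Finset.univ.erase i, ((x j i - x j m)⁻¹ * (t - x j m)) := by
    intro t
    simp [hM, Lagrange.basis, Lagrange.basisDivisor, Polynomial.eval_prod]
  have hLM : ∀ t, L.eval t = M.eval t *
      ∏ q ∈ (Finset.univ.erase (j, i)).filter (fun q : Fin r × Fin n => ¬ q.1 = j),
        ((v (j, i) - v q)⁻¹ * (t - v q)) := by
    intro t
    rw [hLev, hMev, ← Finset.prod_filter_mul_prod_filter_not _ (fun q : Fin r × Fin n => q.1 = j)]
    congr 1
    symm
    refine Finset.prod_bij (fun m _ => (j, m)) ?_ ?_ ?_ ?_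
    · intro m hm
      simpa using hm
    · intro m _ m' _ h
      simpa using h
    · rintro ⟨k, m⟩ h
      simp only [Finset.mem_filter, Finset.mem_erase, Finset.mem_univ, and_true] at h
      obtain ⟨h1, h2⟩ := h
      subst h2
      refine ⟨m, ?_, rfl⟩
      simpa using h1
    · intro m _
      rfl
  -- divisibility
  obtain ⟨g, hg⟩ : Polynomial.X - Polynomial.C (x j i) ∣ 1 - M := by
    rw [Polynomial.dvd_iff_isRoot]
    simp [hMi]
  have hgdeg : g.natDegree < n := by
    by_cases hg0 : g = 0
    · subst hg0
      rw [Polynomial.natDegree_zero]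
      exact hn
    have h1 : (1 - M).natDegree = 1 + g.natDegree := by
      rw [hg, Polynomial.natDegree_mul (Polynomial.X_sub_C_ne_zero _) hg0,
        Polynomial.natDegree_X_sub_C]
    have h2 : (1 - M).natDegree ≤ n - 1 := by
      refine (Polynomial.natDegree_sub_le _ _).trans ?_
      simp [hMdeg]
    omega
  have hPL : ∀ t, L.eval t * (t - x j i) =
      (∏ q ∈ Finset.univ.erase (j, i), (v (j, i) - v q)⁻¹) *
        ∏ p : Fin r × Fin n, (t - x p.1 p.2) := by
    intro t
    rw [hLev, Finset.prod_mul_distrib, ← Finset.prod_erase_mul _ _ (Finset.mem_univ (j, i))]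
    ring
  have hdiff : ∫ t, (L * (1 - M)).eval t ∂(μ j) = 0 := by
    have e : ∀ t, (L * (1 - M)).eval t = ∑ k ∈ Finset.range (g.natDegree + 1),
        ((∏ q ∈ Finset.univ.erase (j, i), (v (j, i) - v q)⁻¹) * g.coeff k) *
        ((∏ p : Fin r × Fin n, (t - x p.1 p.2)) * t ^ k) := by
      intro t
      rw [hg, Polynomial.eval_mul, Polynomial.eval_mul, ← mul_assoc]
      simp only [Polynomial.eval_sub, Polynomial.eval_X, Polynomial.eval_C]
      rw [hPL, Polynomial.eval_eq_sum_range, Finset.mul_sum]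
      refine Finset.sum_congr rfl fun k _ => ?_
      ring
    simp only [e]
    rw [integral_finsetSum]
    · refine Finset.sum_eq_zero fun k hk => ?_
      rw [integral_const_mul, horth j k (by have := Finset.mem_range.mp hk; omega), mul_zero]
    · intro k _
      refine Integrable.const_mul ?_ _
      have := aux_integrable (μ j) (hmom j)
        ((∏ p : Fin r × Fin n, (Polynomial.X - Polynomial.C (x p.1 p.2))) * Polynomial.X ^ k)
      simpa [Polynomial.eval_prod] using this
  have hwe : w j (j, i) = ∫ t, (L * M).eval t ∂(μ j) := by
    have h1 : ∫ t, L.eval t ∂(μ j) =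
        ∫ t, (L * (1 - M)).eval t ∂(μ j) + ∫ t, (L * M).eval t ∂(μ j) := by
      rw [← integral_add (aux_integrable _ (hmom j) _) (aux_integrable _ (hmom j) _)]
      refine integral_congr_ae (Filter.Eventually.of_forall fun t => ?_)
      simp only [Polynomial.eval_mul, Polynomial.eval_sub, Polynomial.eval_one]
      ring
    rw [hw, h1, hdiff, zero_add]
  have hM0 : M ≠ 0 := by
    intro h
    rw [h] at hMi
    simp at hMi
  have hL0 : L ≠ 0 := by
    intro h
    have h1 := hLev (v (j, i))
    rw [h, Polynomial.eval_zero] at h1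
    refine Finset.prod_ne_zero_iff.mpr (fun q hq => ?_) h1.symm
    have h3 := hvinj q (Finset.ne_of_mem_erase hq)
    exact mul_ne_zero (inv_ne_zero h3) h3
  rw [hwe, integral_pos_iff_support_of_nonneg_ae _ (aux_integrable _ (hmom j) _)]
  · have hs : Function.support (fun t => (L * M).eval t) =
        (((L * M).roots.toFinset : Finset ℝ) : Set ℝ)ᶜ := by
      ext t
      simp [hL0, hM0]
    rw [hs]
    exact pos_iff_ne_zero.mpr (hinf j _)
  · have hae : ∀ᵐ t ∂(μ j), t ∈ Set.Icc (a j) (b j) := by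
      rw [ae_iff]
      exact hsupp j
    filter_upwards [hae] with t ht
    simp only [Pi.zero_apply, Polynomial.eval_mul]
    rw [hLM t, mul_right_comm]
    refine mul_nonneg (mul_self_nonneg _) (Finset.prod_nonneg ?_)
    rintro ⟨k, m⟩ hq
    have hk : k ≠ j := (Finset.mem_filter.mp hq).2
    have h2 := hmem j i
    have h3 := hmem k m
    simp only [hv]
    rcases lt_or_gt_of_ne hk with h | h
    · have := hord _ _ h
      exact mul_nonneg (inv_nonneg.mpr (by linarith [h3.2, h2.1])) (by linarith [h3.2, ht.1])
    · have := hord _ _ h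
      exact mul_nonneg_of_nonpos_of_nonpos
        (inv_nonpos.mpr (by linarith [h3.1, h2.2])) (by linarith [h3.1, ht.2])
end

section
/- Let n ≥ 1, 1 ≤ ℓ ≤ n, and let g : (−∞, x_{ℓ,2n}] → [0,∞) have 2n continuous derivatives with g^{(k)}(x) ≥ 0 for all 0 ≤ k ≤ 2n and all x < x_{ℓ,2n}. Then ∑_{k=1}^{ℓ−1} λ_{k,2n}^{(1)} g(x_{k,2n}) ≤ ∫_{[a₁, x_{ℓ,2n})} g(x) dμ₁(x), and ∫_{[a₁, x_{ℓ,2n}]} g(x) dμ₁(x) ≤ ∑_{k=1}^{ℓ} λ_{k,2n}^{(1)} g(x_{k,2n}). -/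
open MeasureTheory

/-- The data of the diagonal type II multiple orthogonal polynomial for an
Angelesco system with two intervals: its `2n` zeros, listed in increasing
order, with `n` of them in `(a₁,b₁)` and `n` of them in `(a₂,b₂)`, and the
multiple orthogonality conditions. -/
structure Angelesco (μ₁ μ₂ : Measure ℝ) (a₁ b₁ a₂ b₂ : ℝ) (n : ℕ) where
  x : Fin (2 * n) → ℝ
  mono : StrictMono x
  mem1 : ∀ i : Fin (2 * n), (i : ℕ) < n → x i ∈ Set.Ioo a₁ b₁
  mem2 : ∀ i : Fin (2 * n), n ≤ (i : ℕ) → x i ∈ Set.Ioo a₂ b₂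
  orth1 : ∀ k < n, ∫ t, (∏ i, (t - x i)) * t ^ k ∂μ₁ = 0
  orth2 : ∀ k < n, ∫ t, (∏ i, (t - x i)) * t ^ k ∂μ₂ = 0

/-- The quadrature weight `λ_{k,2n}^{(μ)} = ∫ ℓ_{k,2n} dμ`, where `ℓ_{k,2n}` is the
`k`-th fundamental Lagrange polynomial for the nodes `x_{1,2n} < ⋯ < x_{2n,2n}`. -/
noncomputable def qweight {μ₁ μ₂ : Measure ℝ} {a₁ b₁ a₂ b₂ : ℝ} {n : ℕ}
    (ad : Angelesco μ₁ μ₂ a₁ b₁ a₂ b₂ n) (μ : Measure ℝ) (k : Fin (2 * n)) : ℝ :=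
  ∫ t, (Lagrange.basis Finset.univ ad.x k).eval t ∂μ

section Helpers
open Polynomial

def AM (σ : ℝ) (S : Set ℝ) : ℕ → (ℝ → ℝ) → Prop
  | 0, f => ∀ t ∈ S, 0 ≤ f t
  | N + 1, f => (∀ t ∈ S, 0 ≤ f t) ∧
      ∀ x ∈ S, ∃ f1, AM σ S N f1 ∧ ∀ t ∈ S, f t - f x = σ * (t - x) * f1 t

lemma AM.nonneg {σ : ℝ} {S : Set ℝ} {N : ℕ} {f : ℝ → ℝ} (h : AM σ S N f) :
    ∀ t ∈ S, 0 ≤ f t := by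
  cases N with
  | zero => exact h
  | succ N => exact h.1

lemma AM.congr {σ : ℝ} {S : Set ℝ} {N : ℕ} {f g : ℝ → ℝ} (h : AM σ S N f)
    (hfg : ∀ t ∈ S, f t = g t) : AM σ S N g := by
  cases N with
  | zero => intro t ht; rw [← hfg t ht]; exact h t ht
  | succ N =>
    refine ⟨fun t ht => by rw [← hfg t ht]; exact h.1 t ht, fun x hx => ?_⟩
    obtain ⟨f1, h1, h2⟩ := h.2 x hx
    exact ⟨f1, h1, fun t ht => by rw [← hfg t ht, ← hfg x hx]; exact h2 t ht⟩

lemma AM.pred {σ : ℝ} {S : Set ℝ} {N : ℕ} : ∀ {f : ℝ → ℝ}, AM σ S (N + 1) f → AM σ S N f := by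
  induction N with
  | zero => intro f h; exact h.1
  | succ N ih =>
    intro f h
    refine ⟨h.1, fun x hx => ?_⟩
    obtain ⟨f1, h1, h2⟩ := h.2 x hx
    exact ⟨f1, ih h1, h2⟩

lemma AM.mono {σ : ℝ} {S : Set ℝ} {N M : ℕ} (hMN : M ≤ N) {f : ℝ → ℝ} (h : AM σ S N f) :
    AM σ S M f := by
  induction hMN with
  | refl => exact h
  | step _ ih => exact ih h.pred

lemma AM.const {σ : ℝ} {S : Set ℝ} {N : ℕ} : ∀ {a : ℝ}, 0 ≤ a → AM σ S N (fun _ => a) := by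
  induction N with
  | zero => intro a ha t _; exact ha
  | succ N ih =>
    intro a ha
    exact ⟨fun t _ => ha, fun x _ => ⟨fun _ => 0, ih le_rfl, fun t _ => by simp⟩⟩

lemma AM.add {σ : ℝ} {S : Set ℝ} {N : ℕ} : ∀ {f g : ℝ → ℝ}, AM σ S N f → AM σ S N g →
    AM σ S N (fun t => f t + g t) := by
  induction N with
  | zero => intro f g hf hg t ht; exact add_nonneg (hf t ht) (hg t ht)
  | succ N ih =>
    intro f g hf hg
    refine ⟨fun t ht => add_nonneg (hf.1 t ht) (hg.1 t ht), fun x hx => ?_⟩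
    obtain ⟨f1, h1, h2⟩ := hf.2 x hx
    obtain ⟨g1, k1, k2⟩ := hg.2 x hx
    exact ⟨_, ih h1 k1, fun t ht => by linear_combination h2 t ht + k2 t ht⟩

lemma AM.mul {σ : ℝ} {S : Set ℝ} {N : ℕ} : ∀ {f g : ℝ → ℝ}, AM σ S N f → AM σ S N g →
    AM σ S N (fun t => f t * g t) := by
  induction N with
  | zero => intro f g hf hg t ht; exact mul_nonneg (hf t ht) (hg t ht)
  | succ N ih =>
    intro f g hf hg
    refine ⟨fun t ht => mul_nonneg (hf.1 t ht) (hg.1 t ht), fun x hx => ?_⟩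
    obtain ⟨f1, h1, h2⟩ := hf.2 x hx
    obtain ⟨g1, k1, k2⟩ := hg.2 x hx
    refine ⟨_, (ih h1 hg.pred).add (ih (AM.const (hf.1 x hx)) k1), fun t ht => ?_⟩
    linear_combination g t * h2 t ht + f x * k2 t ht

/-- `1/(d-t)` on the left of `d`. -/
lemma AM.inv_left {S : Set ℝ} {d : ℝ} (hS : ∀ t ∈ S, t < d) (N : ℕ) :
    AM 1 S N (fun t => (d - t)⁻¹) := by
  induction N with
  | zero => intro t ht; have := hS t ht; exact inv_nonneg.2 (by linarith)
  | succ N ih =>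
    refine ⟨ih.nonneg, fun x hx => ?_⟩
    have hx' := hS x hx
    refine ⟨_, ih.mul (AM.const (a := (d - x)⁻¹) (inv_nonneg.2 (by linarith))), fun t ht => ?_⟩
    have := hS t ht
    have h1 : d - x ≠ 0 := by linarith
    have h2 : d - t ≠ 0 := by linarith
    field_simp
    ring

lemma AM.inv_right {S : Set ℝ} {d : ℝ} (hS : ∀ t ∈ S, d < t) (N : ℕ) :
    AM (-1) S N (fun t => (t - d)⁻¹) := by
  induction N with
  | zero => intro t ht; have := hS t ht; exact inv_nonneg.2 (by linarith)
  | succ N ih =>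
    refine ⟨ih.nonneg, fun x hx => ?_⟩
    have hx' := hS x hx
    refine ⟨_, ih.mul (AM.const (a := (x - d)⁻¹) (inv_nonneg.2 (by linarith))), fun t ht => ?_⟩
    have := hS t ht
    have h1 : x - d ≠ 0 := by linarith
    have h2 : t - d ≠ 0 := by linarith
    field_simp
    ring

lemma AM.inv_right_list {S : Set ℝ} (L : List ℝ) (hS : ∀ t ∈ S, ∀ d ∈ L, d < t) (N : ℕ) :
    AM (-1) S N (fun t => ((L.map (fun d => t - d)).prod)⁻¹) := by
  induction L with
  | nil => simpa using AM.const (zero_le_one)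
  | cons d L ih =>
    have h1 := ih (fun t ht x hx => hS t ht x (by simp [hx]))
    have h2 := AM.inv_right (S := S) (d := d) (fun t ht => hS t ht d (by simp)) N
    refine (h2.mul h1).congr fun t ht => ?_
    simp [mul_comm]

lemma AM.newton (σ : ℝ) (S : Set ℝ) (L : List ℝ) (N : ℕ) : ∀ (f : ℝ → ℝ),
    AM σ S (N + L.length) f → (∀ x ∈ L, x ∈ S) →
    ∃ (h : ℝ[X]) (e : ℝ → ℝ), AM σ S N e ∧ h.degree < (L.length : ℕ) ∧
      (∀ t ∈ S, f t - h.eval t = (L.map (fun x => σ * (t - x))).prod * e t) ∧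
      (∀ t, (∀ x ∈ L, 0 ≤ σ * (t - x)) → 0 ≤ h.eval t) ∧
      (σ = 1 → ∀ (T : Set ℝ) (M : ℕ), (∀ t ∈ T, ∀ x ∈ L, x < t) →
        AM (-1) T M (fun t => h.eval t * ((L.map (fun x => t - x)).prod)⁻¹)) := by
  induction L with
  | nil =>
    intro f hf _
    refine ⟨0, f, hf, by simp, by simp, by simp, fun _ T M _ => ?_⟩
    simpa using AM.const le_rfl
  | cons x L ih =>
    intro f hf hL
    have hx : x ∈ S := hL x (by simp)
    have hf : AM σ S ((N + L.length) + 1) f := hf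
    obtain ⟨f1, h1, h2⟩ := hf.2 x hx
    obtain ⟨h, e, he, hdeg, hrem, hpos, hT⟩ := ih f1 h1 (fun y hy => hL y (by simp [hy]))
    refine ⟨C (f x) + C σ * (X - C x) * h, e, he, ?_, ?_, ?_, ?_⟩
    · refine lt_of_le_of_lt (degree_add_le _ _) (max_lt ?_ ?_)
      · refine lt_of_le_of_lt degree_C_le ?_
        simp only [List.length_cons]
        exact_mod_cast Nat.succ_pos _
      · rcases eq_or_ne h 0 with rfl | h0
        · simp only [mul_zero, degree_zero]; exact WithBot.bot_lt_coe _
        · rw [degree_eq_natDegree h0] at hdeg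
          have hdeg' : h.natDegree < L.length := by exact_mod_cast hdeg
          refine lt_of_le_of_lt degree_le_natDegree ?_
          have : (C σ * (X - C x) * h).natDegree ≤ (0 + 1) + h.natDegree := by
            refine natDegree_mul_le.trans (add_le_add_left (natDegree_mul_le.trans ?_) _)
            simp
          simp only [List.length_cons]
          exact_mod_cast (by omega : (C σ * (X - C x) * h).natDegree < L.length + 1)
    · intro t ht
      simp only [eval_add, eval_mul, eval_C, eval_sub, eval_X, List.map_cons, List.prod_cons]
      linear_combination h2 t ht + σ * (t - x) * hrem t ht
    · intro t ht
      simp only [eval_add, eval_mul, eval_C, eval_sub, eval_X]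
      exact add_nonneg (hf.1 x hx) (mul_nonneg (ht x (by simp))
        (hpos t fun y hy => ht y (by simp [hy])))
    · intro hσ T M hTL
      have k1 := hT hσ T M (fun t ht y hy => hTL t ht y (by simp [hy]))
      have k2 := (AM.const (σ := -1) (S := T) (N := M) (hf.1 x hx)).mul
        (AM.inv_right_list (S := T) (x :: L) hTL M)
      refine (k2.add k1).congr fun t ht => ?_
      have : t - x ≠ 0 := by have := hTL t ht x (by simp); linarith
      subst hσ
      simp only [eval_add, eval_mul, eval_C, eval_sub, eval_X, List.map_cons, List.prod_cons,
        mul_inv]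
      field_simp

lemma AM.interp (S : Set ℝ) (L R : List ℝ) (G : ℝ → ℝ) (hG : AM 1 S L.length G)
    (hL : ∀ x ∈ L, x ∈ S) (hLR : ∀ x ∈ L, ∀ y ∈ R, x < y) :
    ∃ h : ℝ[X], h.degree < ((L.length + R.length : ℕ) : WithBot ℕ) ∧
      (∀ t ∈ S, (∀ y ∈ R, t ≤ y) →
        ∃ e, 0 ≤ e ∧ G t - h.eval t = (L.map (fun x => t - x)).prod * e) ∧
      (∀ t, (∀ x ∈ L, x < t) → ∃ e, 0 ≤ e ∧
        h.eval t = (L.map (fun x => t - x)).prod * (R.map (fun y => y - t)).prod * e) := by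
  obtain ⟨h, e, he, hdeg, hrem, -, hT⟩ := AM.newton 1 S L 0 G (by simpa using hG) hL
  have hφ := hT rfl {t | ∀ x ∈ L, x < t} (0 + R.length) (fun t ht => ht)
  obtain ⟨ρ, e', he', hdeg', hrem', hpos', -⟩ := AM.newton (-1) _ R 0 _ hφ
    (fun y hy x hx => hLR x hx y hy)
  have hw : ∀ t, (((L.map (fun x => X - C x)).prod : ℝ[X])).eval t
      = (L.map (fun x => t - x)).prod := by
    intro t
    rw [← coe_evalRingHom, map_list_prod, List.map_map]
    congr 1
    simp [Function.comp_def]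
  have hwd : ((L.map (fun x => X - C x)).prod : ℝ[X]).degree = (L.length : ℕ) := by
    clear * -
    induction L with
    | nil => simp
    | cons x L ih =>
      rw [List.map_cons, List.prod_cons, degree_mul, ih, degree_X_sub_C, List.length_cons]
      push_cast
      rw [add_comm]
  refine ⟨h - (L.map (fun x => X - C x)).prod * ρ, ?_, ?_, ?_⟩
  · refine lt_of_le_of_lt (degree_sub_le _ _) (max_lt ?_ ?_)
    · exact hdeg.trans_le (by exact_mod_cast Nat.le_add_right _ _)
    · rw [degree_mul, hwd]
      rcases eq_or_ne ρ 0 with rfl | h0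
      · simp
      · rw [degree_eq_natDegree h0] at hdeg' ⊢
        have : ρ.natDegree < R.length := by exact_mod_cast hdeg'
        exact_mod_cast Nat.add_lt_add_left this _
  · intro t ht htR
    refine ⟨e t + ρ.eval t, add_nonneg (he.nonneg t ht) (hpos' t fun y hy => ?_), ?_⟩
    · have := htR y hy; linarith
    · rw [eval_sub, eval_mul, hw]
      have := hrem t ht
      simp only [one_mul] at this
      linear_combination this
  · intro t ht
    refine ⟨e' t, he'.nonneg t ht, ?_⟩
    have h1 := hrem' t ht
    have h0 : (L.map (fun x => t - x)).prod ≠ 0 := by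
      rw [Ne, List.prod_eq_zero_iff]
      intro hm
      obtain ⟨x, hx, hx'⟩ := List.mem_map.1 hm
      have := ht x hx
      linarith
    have h2 : (R.map (fun y => -1 * (t - y))).prod = (R.map (fun y => y - t)).prod := by
      congr 1
      refine List.map_congr_left fun y _ => by ring
    rw [h2] at h1
    rw [eval_sub, eval_mul, hw]
    generalize (L.map (fun x => t - x)).prod = W at *
    field_simp at h1
    linear_combination h1

lemma AM.of_seq (c : ℝ) (N : ℕ) : ∀ (F : ℕ → ℝ → ℝ), (∀ k ≤ N, Continuous (F k)) →
    (∀ k ≤ N, ∀ t, 0 ≤ F k t) → (∀ k < N, ∀ t < c, HasDerivAt (F k) (F (k + 1) t) t) →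
    AM 1 (Set.Iic c) N (F 0) := by
  induction N with
  | zero => intro F _ h _ t _; exact h 0 le_rfl t
  | succ N ih =>
    intro F hc hp hd
    refine ⟨fun t _ => hp 0 (by omega) t, fun x hx => ?_⟩
    have hx : x ≤ c := hx
    have hcont : ∀ k ≤ N, Continuous
        (fun p : ℝ × ℝ => p.2 ^ k * F (k + 1) (x + p.2 * (p.1 - x))) := by
      intro k hk
      have := hc (k + 1) (by omega)
      fun_prop
    refine ⟨_, ih (fun k t => ∫ s in (0:ℝ)..1, s ^ k * F (k + 1) (x + s * (t - x))) ?_ ?_ ?_, ?_⟩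
    · intro k hk
      exact intervalIntegral.continuous_parametric_intervalIntegral_of_continuous'
        (f := fun t s => s ^ k * F (k + 1) (x + s * (t - x))) (hcont k hk) 0 1
    · intro k hk t
      refine intervalIntegral.integral_nonneg zero_le_one fun s hs => ?_
      exact mul_nonneg (pow_nonneg hs.1 _) (hp _ (by omega) _)
    · intro k hk t ht
      have hcc : ∀ j ≤ N, ∀ t, Continuous (fun s : ℝ => s ^ j * F (j + 1) (x + s * (t - x))) := by
        intro j hj t
        exact (hcont j hj).comp (by fun_prop : Continuous (fun s : ℝ => (t, s)))
      obtain ⟨B, hB⟩ := (((isCompact_Icc (a := t - 1) (b := c)).prod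
        (isCompact_Icc (a := (0:ℝ)) (b := 1))).exists_bound_of_continuousOn
          (hcont (k + 1) (by omega)).continuousOn)
      refine (intervalIntegral.hasDerivAt_integral_of_dominated_loc_of_deriv_le
        (F := fun t s => s ^ k * F (k + 1) (x + s * (t - x)))
        (F' := fun t s => s ^ (k + 1) * F (k + 1 + 1) (x + s * (t - x)))
        (s := Set.Ioo (t - 1) c) (bound := fun _ => B) (a := 0) (b := 1) (μ := volume)
        (Ioo_mem_nhds (by linarith) ht) ?_ ?_ ?_ ?_ ?_ ?_).2
      · exact Filter.Eventually.of_forall fun t => (hcc k hk.le t).aestronglyMeasurable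
      · exact (hcc k hk.le t).intervalIntegrable _ _
      · exact (hcc (k + 1) hk t).aestronglyMeasurable
      · refine Filter.Eventually.of_forall fun s hs u hu => ?_
        rw [Set.uIoc_of_le zero_le_one] at hs
        exact hB (u, s) ⟨⟨hu.1.le, hu.2.le⟩, ⟨hs.1.le, hs.2⟩⟩
      · exact intervalIntegrable_const
      · refine Filter.Eventually.of_forall fun s hs u hu => ?_
        rw [Set.uIoc_of_le zero_le_one] at hs
        have hlt : x + s * (u - x) < c := by
          have h1 := mul_lt_mul_of_pos_left hu.2 hs.1
          have h2 := mul_le_mul_of_nonneg_left hx (sub_nonneg.2 hs.2)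
          nlinarith
        have h1 := hd (k + 1) (by omega) _ hlt
        have h2 : HasDerivAt (fun u : ℝ => x + s * (u - x)) (s * 1) u :=
          (((hasDerivAt_id u).sub_const x).const_mul s).const_add x
        have h3 := (h1.comp u h2).const_mul (s ^ k)
        refine h3.congr_deriv ?_
        ring
    · intro t ht
      have ht : t ≤ c := ht
      rcases eq_or_ne t x with rfl | hne
      · simp
      have h0 := hc 0 (by omega)
      have h1 := hc 1 (by omega)
      have := intervalIntegral.integral_eq_sub_of_hasDerivAt_of_le (zero_le_one' ℝ)
        (f := fun s => F 0 (x + s * (t - x))) (f' := fun s => F 1 (x + s * (t - x)) * (t - x))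
        (by fun_prop) (fun s hs => ?_) (Continuous.intervalIntegrable (by fun_prop) _ _)
      · simp only [one_mul, zero_mul, add_zero, add_sub_cancel] at this
        rw [intervalIntegral.integral_mul_const] at this
        simp only [pow_zero, one_mul, zero_add]
        rw [← this, mul_comm]
      · have hlt : x + s * (t - x) < c := by
          rcases lt_or_gt_of_ne hne with h | h
          · nlinarith [mul_pos hs.1 (sub_pos.2 h)]
          · nlinarith [mul_pos (sub_pos.2 hs.2) (sub_pos.2 h)]
        have h2 : HasDerivAt (fun s : ℝ => x + s * (t - x)) (1 * (t - x)) s :=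
          ((hasDerivAt_id s).mul_const (t - x)).const_add x
        refine ((hd 0 (by omega) _ hlt).comp s h2).congr_deriv ?_
        simp

lemma AM.of_contDiffOn (c : ℝ) (N : ℕ) (g : ℝ → ℝ) (hg : ContDiffOn ℝ N g (Set.Iic c))
    (hd : ∀ k ≤ N, ∀ t < c, 0 ≤ iteratedDerivWithin k g (Set.Iic c) t) :
    AM 1 (Set.Iic c) N g := by
  have hu : UniqueDiffOn ℝ (Set.Iic c) := uniqueDiffOn_Iic c
  have hcO : ∀ k ≤ N, ContinuousOn (iteratedDerivWithin k g (Set.Iic c)) (Set.Iic c) :=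
    fun k hk => hg.continuousOn_iteratedDerivWithin (by exact_mod_cast hk) hu
  refine (AM.of_seq c N (fun k t => iteratedDerivWithin k g (Set.Iic c) (min t c)) ?_ ?_ ?_).congr ?_
  · intro k hk
    exact (hcO k hk).comp_continuous (by fun_prop) (fun t => Set.mem_Iic.2 (min_le_right _ _))
  · intro k hk t
    have hmem : min t c ∈ closure (Set.Iio c) := by rw [closure_Iio]; exact Set.mem_Iic.2 (min_le_right _ _)
    have h1 : ContinuousOn (iteratedDerivWithin k g (Set.Iic c)) (closure (Set.Iio c)) := by
      rw [closure_Iio]; exact hcO k hk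
    exact le_on_closure (f := fun _ => (0:ℝ)) (fun u hu => hd k hk u hu)
      continuousOn_const h1 hmem
  · intro k hk t ht
    have h1 : DifferentiableWithinAt ℝ (iteratedDerivWithin k g (Set.Iic c)) (Set.Iic c) t :=
      hg.differentiableOn_iteratedDerivWithin (by exact_mod_cast hk) hu t ht.le
    have h2 := h1.hasDerivWithinAt.hasDerivAt (Iic_mem_nhds ht)
    simp only [min_eq_left ht.le, iteratedDerivWithin_succ]
    refine h2.congr_of_eventuallyEq ?_
    filter_upwards [Iio_mem_nhds ht] with u hu
    rw [min_eq_left (le_of_lt hu)]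
  · intro t ht
    simp [min_eq_left (show t ≤ c from ht)]

lemma AM.inv_left_finset {ι : Type*} {S : Set ℝ} (s : Finset ι) (v : ι → ℝ)
    (hS : ∀ t ∈ S, ∀ i ∈ s, t < v i) (N : ℕ) :
    AM 1 S N (fun t => (∏ i ∈ s, (v i - t))⁻¹) := by
  classical
  induction s using Finset.induction_on with
  | empty => simpa using AM.const (zero_le_one)
  | insert d s hd ih =>
    have h1 := ih (fun t ht x hx => hS t ht x (by simp [hx]))
    have h2 := AM.inv_left (S := S) (d := v d) (fun t ht => hS t ht d (by simp)) N
    refine (h2.mul h1).congr fun t ht => ?_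
    rw [Finset.prod_insert hd, mul_inv]

lemma integrable_poly {μ : Measure ℝ} (hmom : ∀ k : ℕ, Integrable (fun t : ℝ => t ^ k) μ)
    (p : ℝ[X]) : Integrable (fun t => p.eval t) μ := by
  simp only [eval_eq_sum_range]
  exact integrable_finsetSum _ fun k _ => (hmom k).const_mul _

lemma ang_quad {μ₁ μ₂ : Measure ℝ} {a₁ b₁ a₂ b₂ : ℝ} {n : ℕ}
    (ad : Angelesco μ₁ μ₂ a₁ b₁ a₂ b₂ n) (hn : 1 ≤ n)
    (hmom : ∀ k : ℕ, Integrable (fun t : ℝ => t ^ k) μ₁)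
    (H : ℝ[X]) (hH : H.natDegree ≤ 3 * n - 1) :
    ∫ t, H.eval t ∂μ₁ = ∑ i, qweight ad μ₁ i * H.eval (ad.x i) := by
  set P : ℝ[X] := Lagrange.nodal Finset.univ ad.x with hP
  have hPm : P.Monic := Lagrange.nodal_monic
  have hPd : P.natDegree = 2 * n := by simp [hP, Lagrange.natDegree_nodal]
  have hPdeg : P.degree = ((Finset.univ : Finset (Fin (2 * n))).card : ℕ) := Lagrange.degree_nodal
  have hdec := modByMonic_add_div H P
  have hq : (H /ₘ P).natDegree < n := by
    rw [natDegree_divByMonic _ hPm, hPd]; omega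
  have hr : (H %ₘ P).degree < ((Finset.univ : Finset (Fin (2 * n))).card : ℕ) := by
    rw [← hPdeg]; exact degree_modByMonic_lt _ hPm
  have hri := Lagrange.eq_interpolate (s := Finset.univ) (v := ad.x)
    (ad.mono.injective.injOn) hr
  have hnode : ∀ i, (H %ₘ P).eval (ad.x i) = H.eval (ad.x i) := by
    intro i
    conv_rhs => rw [← hdec]
    rw [eval_add, eval_mul, hP, Lagrange.eval_nodal_at_node (Finset.mem_univ i)]
    simp
  have hortho : ∫ t, (P * (H /ₘ P)).eval t ∂μ₁ = 0 := by
    have : ∀ t, (P * (H /ₘ P)).eval t =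
        ∑ k ∈ Finset.range n, (H /ₘ P).coeff k * ((∏ i, (t - ad.x i)) * t ^ k) := by
      intro t
      rw [eval_mul, eval_eq_sum_range' hq, hP, Lagrange.eval_nodal, Finset.mul_sum]
      exact Finset.sum_congr rfl fun k _ => by ring
    simp only [this]
    rw [integral_finsetSum]
    · refine Finset.sum_eq_zero fun k hk => ?_
      rw [integral_const_mul, ad.orth1 k (Finset.mem_range.1 hk), mul_zero]
    · intro k _
      refine Integrable.const_mul ?_ _
      have := integrable_poly hmom (P * X ^ k)
      simpa [hP, Lagrange.eval_nodal] using this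
  have hrem : ∫ t, (H %ₘ P).eval t ∂μ₁ = ∑ i, qweight ad μ₁ i * H.eval (ad.x i) := by
    rw [hri]
    simp only [Lagrange.interpolate_apply, eval_finsetSum, eval_mul, eval_C, hnode]
    rw [integral_finsetSum]
    · refine Finset.sum_congr rfl fun i _ => ?_
      rw [integral_const_mul, mul_comm]; rfl
    · intro i _
      exact (integrable_poly hmom _).const_mul _
  have : ∀ t, H.eval t = (H %ₘ P).eval t + (P * (H /ₘ P)).eval t := by
    intro t; rw [← eval_add, hdec]
  simp only [this]
  rw [integral_add (integrable_poly hmom _) (integrable_poly hmom _), hortho, add_zero, hrem]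
  simp only [← this]

lemma ang_core {n : ℕ} (hn : 1 ≤ n) (x : Fin (2 * n) → ℝ) (b c : ℝ) (hcb : c < b)
    (hx2 : ∀ i : Fin (2 * n), n ≤ (i : ℕ) → b < x i)
    (g : ℝ → ℝ) (hg : AM 1 (Set.Iic c) (2 * n) g) (L R : List ℝ)
    (hlen : L.length + R.length = 2 * n - 1) (hLc : ∀ y ∈ L, y ≤ c)
    (hLR : ∀ y ∈ L, ∀ z ∈ R, y < z) :
    ∃ H : ℝ[X], H.natDegree ≤ 3 * n - 1 ∧
      (∀ t ≤ c, (∀ z ∈ R, t ≤ z) →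
        ∃ e, 0 ≤ e ∧ g t - H.eval t = (L.map (fun y => t - y)).prod * e) ∧
      (∀ t ≤ b, (∀ y ∈ L, y < t) → ∃ e, 0 ≤ e ∧
        H.eval t = (L.map (fun y => t - y)).prod * (R.map (fun z => z - t)).prod * e) ∧
      (∀ i : Fin (2 * n), n ≤ (i : ℕ) → H.eval (x i) = 0) := by
  set s : Finset (Fin (2 * n)) := Finset.univ.filter (fun i => n ≤ (i : ℕ)) with hs
  have hmem : ∀ i, i ∈ s ↔ n ≤ (i : ℕ) := by intro i; simp [hs]
  have hscard : s.card ≤ n := by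
    have h1 : (Finset.univ.filter (fun i : Fin (2 * n) => ¬ n ≤ (i : ℕ))).card = n := by
      have : (Finset.univ.filter (fun i : Fin (2 * n) => ¬ n ≤ (i : ℕ)))
          = Finset.univ.map (Fin.castLEEmb (by omega : n ≤ 2 * n)) := by
        ext i
        simp only [Finset.mem_filter, Finset.mem_univ, true_and, Finset.mem_map, not_le]
        constructor
        · intro h; exact ⟨⟨i, h⟩, by ext; simp⟩
        · rintro ⟨j, rfl⟩; simp
      rw [this]; simp
    have h2 : s.card + (Finset.univ.filter (fun i : Fin (2 * n) => ¬ n ≤ (i : ℕ))).card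
        = (Finset.univ : Finset (Fin (2 * n))).card :=
      Finset.card_filter_add_card_filter_not (fun i : Fin (2 * n) => n ≤ (i : ℕ))
    rw [h1, Finset.card_univ, Fintype.card_fin] at h2
    omega
  set q : ℝ[X] := ∏ i ∈ s, (C (x i) - X) with hqdef
  have hqe : ∀ t, q.eval t = ∏ i ∈ s, (x i - t) := by
    intro t; simp [hqdef, eval_prod]
  have hqd : q.natDegree ≤ n := by
    refine (natDegree_prod_le _ _).trans ?_
    refine (Finset.sum_le_card_nsmul _ _ 1 fun i _ => ?_).trans (by simpa using hscard)
    exact (natDegree_sub_le _ _).trans (by simp)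
  have hqpos : ∀ t ≤ b, 0 < q.eval t := by
    intro t ht
    rw [hqe]
    refine Finset.prod_pos fun i hi => ?_
    have := hx2 i ((hmem i).1 hi)
    linarith
  have hG := hg.mul (AM.inv_left_finset (S := Set.Iic c) s x (fun t ht i hi => by
    have := hx2 i ((hmem i).1 hi)
    have : t ≤ c := ht
    linarith) (2 * n))
  obtain ⟨h, hdeg, h1, h2⟩ := AM.interp (Set.Iic c) L R _ (hG.mono (by omega)) hLc hLR
  refine ⟨h * q, ?_, ?_, ?_, ?_⟩
  · refine natDegree_mul_le.trans ?_
    have : h.natDegree ≤ 2 * n - 1 := by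
      rw [hlen] at hdeg
      exact natDegree_le_of_degree_le hdeg.le
    omega
  · intro t ht htR
    obtain ⟨e, he, hE⟩ := h1 t ht htR
    have hp := hqpos t (by linarith)
    refine ⟨e * q.eval t, mul_nonneg he hp.le, ?_⟩
    rw [← hqe] at hE
    have hne := hp.ne'
    rw [eval_mul, ← mul_assoc, ← hE]
    field_simp
  · intro t ht htL
    obtain ⟨e, he, hE⟩ := h2 t htL
    refine ⟨e * q.eval t, mul_nonneg he (hqpos t ht).le, ?_⟩
    rw [eval_mul, hE]; ring
  · intro i hi
    rw [eval_mul, hqe, Finset.prod_eq_zero ((hmem i).2 hi) (sub_self _), mul_zero]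

lemma prod_sub_eq_zero {L : List ℝ} {t : ℝ} (h : t ∈ L) : (L.map (fun y => t - y)).prod = 0 :=
  List.prod_eq_zero (List.mem_map.2 ⟨t, h, sub_self t⟩)

lemma prod_sub_eq_zero' {L : List ℝ} {t : ℝ} (h : t ∈ L) : (L.map (fun y => y - t)).prod = 0 :=
  List.prod_eq_zero (List.mem_map.2 ⟨t, h, sub_self t⟩)

end Helpers

/-- **Possé–Chebyshev–Markov–Stieltjes inequalities for the positive weights.**
Let `1 ≤ ℓ ≤ n` and let `g : (−∞, x_{ℓ,2n}] → [0,∞)` have `2n` continuous derivatives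
there with `g⁽ᵏ⁾ ≥ 0` for `0 ≤ k ≤ 2n`.  Then
`∑_{k=1}^{ℓ−1} λ_{k,2n}^{(1)} g(x_{k,2n}) ≤ ∫_{[a₁,x_{ℓ,2n})} g dμ₁` and
`∫_{[a₁,x_{ℓ,2n}]} g dμ₁ ≤ ∑_{k=1}^{ℓ} λ_{k,2n}^{(1)} g(x_{k,2n})`. -/
theorem angelesco_PCMS_inequalities
    (μ₁ μ₂ : Measure ℝ) [IsFiniteMeasure μ₁] [IsFiniteMeasure μ₂]
    (a₁ b₁ a₂ b₂ : ℝ) (hab₁ : a₁ < b₁) (hgap : b₁ ≤ a₂) (hab₂ : a₂ < b₂)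
    (hsupp₁ : μ₁ (Set.Icc a₁ b₁)ᶜ = 0) (hsupp₂ : μ₂ (Set.Icc a₂ b₂)ᶜ = 0)
    (hinf₁ : ∀ s : Finset ℝ, μ₁ ((s : Set ℝ))ᶜ ≠ 0)
    (hinf₂ : ∀ s : Finset ℝ, μ₂ ((s : Set ℝ))ᶜ ≠ 0)
    (hmom₁ : ∀ k : ℕ, Integrable (fun t : ℝ => t ^ k) μ₁)
    (hmom₂ : ∀ k : ℕ, Integrable (fun t : ℝ => t ^ k) μ₂)
    (n : ℕ) (hn : 1 ≤ n) (ad : Angelesco μ₁ μ₂ a₁ b₁ a₂ b₂ n)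
    (ℓ : ℕ) (hℓ₁ : 1 ≤ ℓ) (hℓ₂ : ℓ ≤ n)
    (g : ℝ → ℝ)
    (hsmooth : ContDiffOn ℝ (2 * n) g (Set.Iic (ad.x ⟨ℓ - 1, by omega⟩)))
    (hgnonneg : ∀ t ∈ Set.Iic (ad.x ⟨ℓ - 1, by omega⟩), 0 ≤ g t)
    (hgder : ∀ k ≤ 2 * n, ∀ t < ad.x ⟨ℓ - 1, by omega⟩,
      0 ≤ iteratedDerivWithin k g (Set.Iic (ad.x ⟨ℓ - 1, by omega⟩)) t) :
    (∑ i ∈ Finset.univ.filter (fun i : Fin (2 * n) => (i : ℕ) < ℓ - 1),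
        qweight ad μ₁ i * g (ad.x i))
      ≤ (∫ t in Set.Ico a₁ (ad.x ⟨ℓ - 1, by omega⟩), g t ∂μ₁) ∧
    (∫ t in Set.Icc a₁ (ad.x ⟨ℓ - 1, by omega⟩), g t ∂μ₁)
      ≤ ∑ i ∈ Finset.univ.filter (fun i : Fin (2 * n) => (i : ℕ) < ℓ),
          qweight ad μ₁ i * g (ad.x i) := by
  set c := ad.x ⟨ℓ - 1, by omega⟩ with hc
  have hcmem := ad.mem1 ⟨ℓ - 1, by omega⟩ (by simp only; omega)
  rw [← hc] at hcmem
  have hg : AM 1 (Set.Iic c) (2 * n) g := by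
    refine AM.of_contDiffOn c (2 * n) g ?_ hgder
    exact_mod_cast hsmooth
  have hx2 : ∀ i : Fin (2 * n), n ≤ (i : ℕ) → b₁ < ad.x i := fun i hi =>
    lt_of_le_of_lt hgap (ad.mem2 i hi).1
  have hae : ∀ᵐ t ∂μ₁, t ∈ Set.Icc a₁ b₁ := by
    rw [ae_iff]; exact hsupp₁
  have hgc : ContinuousOn g (Set.Icc a₁ c) :=
    hsmooth.continuousOn.mono fun t ht => ht.2
  have hgi : IntegrableOn g (Set.Icc a₁ c) μ₁ := hgc.integrableOn_compact isCompact_Icc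
  set A : List ℝ := List.ofFn (fun j : Fin (ℓ - 1) => ad.x ⟨j, by omega⟩) with hA
  set B : List ℝ := List.ofFn (fun j : Fin (n - ℓ) => ad.x ⟨ℓ + j, by omega⟩) with hB
  have hAlen : A.length = ℓ - 1 := by simp [hA]
  have hBlen : B.length = n - ℓ := by simp [hB]
  have hAc : ∀ y ∈ A, y < c := by
    intro y hy
    obtain ⟨j, rfl⟩ := (List.mem_ofFn' _ _).1 hy
    exact ad.mono (by rw [Fin.lt_def]; exact j.2)
  have hBc : ∀ y ∈ B, c < y := by
    intro y hy
    obtain ⟨j, rfl⟩ := (List.mem_ofFn' _ _).1 hy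
    exact ad.mono (by rw [Fin.lt_def]; simp only; omega)
  have hAmem : ∀ i : Fin (2 * n), (i : ℕ) < ℓ - 1 → ad.x i ∈ A := fun i hi =>
    (List.mem_ofFn' _ _).2 ⟨⟨i, hi⟩, rfl⟩
  have hBmem : ∀ i : Fin (2 * n), ℓ ≤ (i : ℕ) → (i : ℕ) < n → ad.x i ∈ B := fun i hi hi' =>
    (List.mem_ofFn' _ _).2 ⟨⟨i - ℓ, by omega⟩, by
      simp only
      congr 1
      ext
      simp only
      omega⟩
  have hci : ∀ i : Fin (2 * n), (i : ℕ) = ℓ - 1 → ad.x i = c := fun i hi => by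
    rw [hc]; congr 1; ext; exact hi
  constructor
  · obtain ⟨H, hdeg, h1, h2, h3⟩ := ang_core hn ad.x b₁ c hcmem.2 hx2 g hg (A ++ A)
      (c :: (B ++ B)) (by simp only [List.length_append, List.length_cons, hAlen, hBlen]; omega)
      (by intro y hy; rw [List.mem_append, or_self] at hy; exact (hAc y hy).le)
      (by
        intro y hy z hz
        rw [List.mem_append, or_self] at hy
        rw [List.mem_cons, List.mem_append, or_self] at hz
        rcases hz with rfl | hz
        · exact hAc y hy
        · exact (hAc y hy).trans (hBc z hz))
    have hval : ∀ i, qweight ad μ₁ i * H.eval (ad.x i)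
        = if (i : ℕ) < ℓ - 1 then qweight ad μ₁ i * g (ad.x i) else 0 := by
      intro i
      split_ifs with hi
      · have hm := hAmem i hi
        have hlt := hAc _ hm
        obtain ⟨e, -, he⟩ := h1 (ad.x i) hlt.le (by
          intro z hz
          rw [List.mem_cons, List.mem_append, or_self] at hz
          rcases hz with rfl | hz
          · exact hlt.le
          · exact (hlt.trans (hBc z hz)).le)
        rw [prod_sub_eq_zero (by simp [hm])] at he
        rw [show H.eval (ad.x i) = g (ad.x i) by linarith]
      · by_cases hin : n ≤ (i : ℕ)
        · rw [h3 i hin, mul_zero]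
        · have hm : ad.x i ∈ c :: (B ++ B) := by
            rcases Nat.eq_or_lt_of_le (not_lt.1 hi) with h | h
            · rw [hci i h.symm]; simp
            · simp [hBmem i (by omega) (by omega)]
          have hge : c ≤ ad.x i := by
            rw [hc]; exact ad.mono.monotone (by rw [Fin.le_def]; exact not_lt.1 hi)
          obtain ⟨e, -, he⟩ := h2 (ad.x i) (ad.mem1 i (by omega)).2.le (by
            intro y hy
            rw [List.mem_append, or_self] at hy
            exact (hAc y hy).trans_le hge)
          rw [he, prod_sub_eq_zero' hm]; simp
    rw [Finset.sum_filter, ← Finset.sum_congr rfl (fun i _ => hval i),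
      ← ang_quad ad hn hmom₁ H hdeg, ← integral_indicator measurableSet_Ico]
    refine integral_mono_ae (integrable_poly hmom₁ H)
      ((integrable_indicator_iff measurableSet_Ico).2 (hgi.mono_set Set.Ico_subset_Icc_self)) ?_
    filter_upwards [hae] with t ht
    by_cases htc : t < c
    · rw [Set.indicator_of_mem (Set.mem_Ico.2 ⟨ht.1, htc⟩)]
      obtain ⟨e, he, hE⟩ := h1 t htc.le (by
          intro z hz
          rw [List.mem_cons, List.mem_append, or_self] at hz
          rcases hz with rfl | hz
          · exact htc.le
          · exact (htc.trans (hBc z hz)).le)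
      rw [List.map_append, List.prod_append] at hE
      have := mul_nonneg (mul_self_nonneg (A.map (fun y => t - y)).prod) he
      linarith
    · rw [Set.indicator_of_notMem (fun h => htc h.2)]
      obtain ⟨e, he, hE⟩ := h2 t ht.2 (by
            intro y hy
            rw [List.mem_append, or_self] at hy
            exact (hAc y hy).trans_le (not_lt.1 htc))
      rw [List.map_append, List.prod_append, List.map_cons, List.prod_cons, List.map_append,
        List.prod_append] at hE
      have := mul_nonneg (mul_nonneg (mul_nonneg (mul_self_nonneg (A.map (fun y => t - y)).prod)
        (mul_self_nonneg (B.map (fun y => y - t)).prod)) he) (sub_nonneg.2 (not_lt.1 htc))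
      linarith
  · obtain ⟨H, hdeg, h1, h2, h3⟩ := ang_core hn ad.x b₁ c hcmem.2 hx2 g hg (c :: (A ++ A))
      (B ++ B) (by simp only [List.length_append, List.length_cons, hAlen, hBlen]; omega)
      (by
        intro y hy
        rw [List.mem_cons, List.mem_append, or_self] at hy
        rcases hy with rfl | hy
        · exact le_rfl
        · exact (hAc y hy).le)
      (by
        intro y hy z hz
        rw [List.mem_cons, List.mem_append, or_self] at hy
        rw [List.mem_append, or_self] at hz
        rcases hy with rfl | hy
        · exact hBc z hz
        · exact (hAc y hy).trans (hBc z hz))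
    have hR : ∀ t ≤ c, ∀ z ∈ B ++ B, t ≤ z := by
      intro t ht z hz
      rw [List.mem_append, or_self] at hz
      exact ht.trans (hBc z hz).le
    have hL : ∀ t, c < t → ∀ y ∈ c :: (A ++ A), y < t := by
      intro t ht y hy
      rw [List.mem_cons, List.mem_append, or_self] at hy
      rcases hy with rfl | hy
      · exact ht
      · exact (hAc y hy).trans ht
    have hval : ∀ i, qweight ad μ₁ i * H.eval (ad.x i)
        = if (i : ℕ) < ℓ then qweight ad μ₁ i * g (ad.x i) else 0 := by
      intro i
      split_ifs with hi
      · have hm : ad.x i ∈ c :: (A ++ A) := by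
          rcases Nat.eq_or_lt_of_le (show (i : ℕ) ≤ ℓ - 1 by omega) with h | h
          · rw [hci i h]; simp
          · simp [hAmem i h]
        have hle : ad.x i ≤ c := by
          rw [hc]; exact ad.mono.monotone (by rw [Fin.le_def]; simp only; omega)
        obtain ⟨e, -, he⟩ := h1 (ad.x i) hle (hR _ hle)
        rw [prod_sub_eq_zero hm] at he
        rw [show H.eval (ad.x i) = g (ad.x i) by linarith]
      · by_cases hin : n ≤ (i : ℕ)
        · rw [h3 i hin, mul_zero]
        · have hm : ad.x i ∈ B := hBmem i (by omega) (by omega)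
          obtain ⟨e, -, he⟩ := h2 (ad.x i) (ad.mem1 i (by omega)).2.le (hL _ (hBc _ hm))
          rw [he, prod_sub_eq_zero' (by simp [hm])]; simp
    rw [Finset.sum_filter, ← Finset.sum_congr rfl (fun i _ => hval i),
      ← ang_quad ad hn hmom₁ H hdeg, ← integral_indicator measurableSet_Icc]
    refine integral_mono_ae ((integrable_indicator_iff measurableSet_Icc).2 hgi)
      (integrable_poly hmom₁ H) ?_
    filter_upwards [hae] with t ht
    by_cases htc : t ≤ c
    · rw [Set.indicator_of_mem (Set.mem_Icc.2 ⟨ht.1, htc⟩)]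
      obtain ⟨e, he, hE⟩ := h1 t htc (hR t htc)
      rw [List.map_cons, List.prod_cons, List.map_append, List.prod_append] at hE
      have := mul_nonneg (mul_nonneg (mul_self_nonneg (A.map (fun y => t - y)).prod) he)
        (sub_nonneg.2 htc)
      linarith
    · rw [Set.indicator_of_notMem (fun h => htc h.2)]
      obtain ⟨e, he, hE⟩ := h2 t ht.2 (hL t (not_le.1 htc))
      rw [List.map_cons, List.prod_cons, List.map_append, List.prod_append, List.map_append,
        List.prod_append] at hE
      have := mul_nonneg (mul_nonneg (mul_nonneg (mul_self_nonneg (A.map (fun y => t - y)).prod)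
        (mul_self_nonneg (B.map (fun y => y - t)).prod)) he) (sub_nonneg.2 (not_le.1 htc).le)
      linarith
end

section
/- Let b ∈ ℝ and let t₁,…,t_n be real numbers with t_i > b for every i, and set q(x) = ∏_{i=1}^{n} (t_i − x). Then for every integer j ≥ 0 and every x ≤ b, the j-th derivative of 1/q at x is strictly positive: (d^j/dx^j)(1/q)(x) > 0. -/
lemma base_pos_aux (c x : ℝ) (h : x < c) (j : ℕ) :
    0 < iteratedDeriv j (fun y : ℝ => (c - y)⁻¹) x := by
  have h1 : (fun y : ℝ => (c - y)⁻¹) = fun y : ℝ => ((-1) * y + c)⁻¹ := by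
    funext y; congr 1; ring
  rw [h1, iteratedDeriv_eq_iterate, iter_deriv_inv_linear]
  have h2 : (0:ℝ) < -1 * x + c := by linarith
  have h3 : (-1 : ℝ) ^ j * (-1) ^ j = 1 := by rw [← mul_pow]; simp
  have h4 : (0:ℝ) < (j.factorial : ℝ) * (-1 * x + c) ^ (-1 - j : ℤ) := by positivity
  calc (0:ℝ) < ((-1 : ℝ) ^ j * (-1) ^ j) * ((j.factorial : ℝ) * (-1 * x + c) ^ (-1 - j : ℤ)) := by
        rw [h3, one_mul]; exact h4
    _ = _ := by ring

lemma prod_pos_aux (n : ℕ) (x : ℝ) (t : Fin (n + 1) → ℝ) (ht : ∀ i, x < t i) :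
    ∀ j : ℕ, 0 < iteratedDeriv j (fun y : ℝ => (∏ i, (t i - y))⁻¹) x := by
  induction n with
  | zero => intro j; simpa using base_pos_aux (t 0) x (ht 0) j
  | succ n ih =>
    intro j
    have h1 : (fun y : ℝ => (∏ i, (t i - y))⁻¹) =
        fun y : ℝ => (t 0 - y)⁻¹ * (∏ i : Fin (n + 1), (t i.succ - y))⁻¹ := by
      funext y; rw [Fin.prod_univ_succ, mul_inv]
    rw [h1, iteratedDeriv_fun_mul]
    · refine Finset.sum_pos (fun i hi => ?_) ⟨0, by simp⟩
      have hc : 0 < j.choose i := Nat.choose_pos (by simpa [Nat.lt_succ_iff] using hi)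
      have a := base_pos_aux (t 0) x (ht 0) i
      have b := ih (fun i => t i.succ) (fun i => ht _) (j - i)
      positivity
    · exact ContDiffAt.inv (by fun_prop) (sub_pos.2 (ht 0)).ne'
    · exact ContDiffAt.inv (by fun_prop)
        (Finset.prod_pos fun i _ => sub_pos.2 (ht i.succ)).ne'

/-- **Positivity of all derivatives of `1/q`.**
Let `q(x) = ∏_{i=1}^{n} (tᵢ − x)` with every `tᵢ > b`.  Then for every `j ≥ 0`
and every `x ≤ b`, the `j`-th derivative of `1/q` at `x` is strictly positive. -/
theorem iteratedDeriv_one_div_prod_pos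
    (n : ℕ) (hn : 1 ≤ n) (b : ℝ) (t : Fin n → ℝ) (ht : ∀ i, b < t i) :
    ∀ j : ℕ, ∀ x ≤ b, 0 < iteratedDeriv j (fun y : ℝ => 1 / ∏ i, (t i - y)) x := by
  intro j x hx
  obtain ⟨m, rfl⟩ : ∃ m, n = m + 1 := ⟨n - 1, by omega⟩
  simp only [one_div]
  exact prod_pos_aux m x t (fun i => lt_of_le_of_lt hx (ht i)) j
end

section
/- For all real numbers a < b < t, one has (1/π) ∫_a^b (1/(t − x)) √((x − a)/(b − x)) dx = −1 + √((t − a)/(t − b)). -/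
open Filter Topology MeasureTheory in
/-- **An explicit equilibrium-type integral.**
For `a < b < t`, `(1/π) ∫_a^b (1/(t − x)) √((x − a)/(b − x)) dx = −1 + √((t − a)/(t − b))`. -/
theorem equilibrium_integral_eval (a b t : ℝ) (hab : a < b) (hbt : b < t) :
    (1 / Real.pi) * ∫ x in Set.Ioo a b, (1 / (t - x)) * Real.sqrt ((x - a) / (b - x)) =
      -1 + Real.sqrt ((t - a) / (t - b)) := by
  have hq : 0 < t - b := by linarith
  have hp : 0 < t - a := by linarith
  set s := Real.sqrt ((t - a) / (t - b)) with hs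
  have hs0 : 0 < s := Real.sqrt_pos.2 (by positivity)
  have hs2 : s ^ 2 * (t - b) = t - a := by
    rw [hs, Real.sq_sqrt (by positivity)]; field_simp
  clear_value s
  let u : ℝ → ℝ := fun x => Real.sqrt ((x - a) / (b - x))
  let F : ℝ → ℝ := fun x => 2 * (s * Real.arctan (u x / s) - Real.arctan (u x))
  have hd : ∀ x ∈ Set.Ioo a b, HasDerivAt F (1 / (t - x) * Real.sqrt ((x - a) / (b - x))) x := by
    intro x hx
    have h1 : 0 < x - a := by linarith [hx.1]
    have h2 : 0 < b - x := by linarith [hx.2]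
    have h3 : 0 < t - x := by linarith
    have hu0 : 0 < u x := Real.sqrt_pos.2 (by positivity)
    have hu2 : u x ^ 2 * (b - x) = x - a := by
      simp only [u]; rw [Real.sq_sqrt (by positivity)]; field_simp
    have hr : HasDerivAt (fun x => (x - a) / (b - x)) ((b - a) / (b - x) ^ 2) x := by
      have := ((hasDerivAt_id x).sub_const a).div ((hasDerivAt_id x).const_sub b) h2.ne'
      refine this.congr_deriv ?_
      simp only [id]
      congr 1; ring
    have hud : HasDerivAt u ((b - a) / (b - x) ^ 2 / (2 * u x)) x :=
      hr.sqrt (by positivity)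
    have := (((hud.div_const s).arctan.const_mul s).sub hud.arctan).const_mul 2
    refine this.congr_deriv ?_
    change _ = 1 / (t - x) * u x
    generalize u x = v at *
    have e1 : 1 + v ^ 2 = (b - a) / (b - x) := by
      field_simp; linarith
    have e2 : 1 + (v / s) ^ 2 = (b - a) * (t - x) / ((b - x) * (t - a)) := by
      have hv : v ^ 2 = (x - a) / (b - x) := by field_simp; linarith
      have hss : s ^ 2 = (t - a) / (t - b) := by field_simp; linarith
      rw [div_pow, hv, hss]; field_simp; ring
    have hba : 0 < b - a := by linarith
    rw [e1, e2]
    field_simp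
    linear_combination (-1) * hu2
  have hrb : Tendsto (fun x => (x - a) / (b - x)) (𝓝[<] b) atTop := by
    have h1 : Tendsto (fun x => x - a) (𝓝[<] b) (𝓝 (b - a)) :=
      ((continuous_id.sub continuous_const).tendsto b).mono_left nhdsWithin_le_nhds
    have h2 : Tendsto (fun x => b - x) (𝓝[<] b) (𝓝[>] 0) := by
      refine tendsto_nhdsWithin_iff.2 ⟨?_, ?_⟩
      · have : Tendsto (fun x => b - x) (𝓝 b) (𝓝 (b - b)) :=
          (continuous_const.sub continuous_id).tendsto b
        rw [sub_self] at this
        exact this.mono_left nhdsWithin_le_nhds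
      · filter_upwards [self_mem_nhdsWithin] with x hx
        exact sub_pos.2 (Set.mem_Iio.1 hx)
    exact h1.pos_mul_atTop (by linarith) (tendsto_inv_nhdsGT_zero.comp h2)
  have hub : Tendsto u (𝓝[<] b) atTop := Real.tendsto_sqrt_atTop.comp hrb
  have hFb : Tendsto F (𝓝[<] b) (𝓝 (Real.pi * (s - 1))) := by
    have hat : Tendsto Real.arctan atTop (𝓝 (Real.pi / 2)) :=
      Real.tendsto_arctan_atTop.mono_right nhdsWithin_le_nhds
    have := (((hat.comp (hub.atTop_div_const hs0)).const_mul s).sub (hat.comp hub)).const_mul 2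
    have e : 2 * (s * (Real.pi / 2) - Real.pi / 2) = Real.pi * (s - 1) := by ring
    rw [e] at this
    exact this
  have hFa : Tendsto F (𝓝[>] a) (𝓝 0) := by
    have hc : ContinuousAt u a := by
      refine Real.continuous_sqrt.continuousAt.comp ?_
      refine ContinuousAt.div (by fun_prop) (by fun_prop) (by linarith)
    have hF : ContinuousAt F a := by
      have h1 := Real.continuous_arctan.continuousAt.comp hc
      have h2 := Real.continuous_arctan.continuousAt.comp (hc.div_const s)
      exact ((h2.const_mul s).sub h1).const_mul 2
    have h0 : F a = 0 := by simp [F, u]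
    have := hF.tendsto
    rw [h0] at this
    exact this.mono_left nhdsWithin_le_nhds
  have hnn : ∀ x ∈ Set.Ioo a b, 0 ≤ 1 / (t - x) * Real.sqrt ((x - a) / (b - x)) := by
    intro x hx
    have h3 : 0 < t - x := by linarith [hx.2]
    positivity
  have hcont := continuousOn_Icc_extendFrom_Ioo
    (fun x hx => (hd x hx).continuousAt.continuousWithinAt : ContinuousOn F (Set.Ioo a b)) hFa hFb
  have hint : IntegrableOn (fun x => 1 / (t - x) * Real.sqrt ((x - a) / (b - x)))
      (Set.Ioc a b) := by
    refine intervalIntegral.integrableOn_deriv_of_nonneg hcont (fun x hx => ?_) hnn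
    refine (hd x hx).congr_of_eventuallyEq ?_
    filter_upwards [isOpen_Ioo.mem_nhds hx] with y hy
    exact extendFrom_eq (subset_closure hy)
      ((hd y hy).continuousAt.tendsto.mono_left nhdsWithin_le_nhds)
  have key := intervalIntegral.integral_eq_sub_of_hasDerivAt_of_tendsto hab hd
    ((intervalIntegrable_iff_integrableOn_Ioc_of_le hab.le).2 hint) hFa hFb
  rw [intervalIntegral.integral_of_le hab.le, integral_Ioc_eq_integral_Ioo] at key
  rw [key]
  field_simp
  ring
end

section
/- For every n ≥ 1 and every 1 ≤ j ≤ n, one has λ_{j,2n}^{(1)} ≥ λ_m(x_{j,2n}; μ₁), where m = ⌈3n/2⌉ is the least integer ≥ 3n/2. -/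
open MeasureTheory

/-- The Christoffel function `λ_m(x;μ) = inf { ∫ P² dμ : deg P ≤ m − 1, P(x) = 1 }`. -/
noncomputable def christoffel (μ : Measure ℝ) (m : ℕ) (x : ℝ) : ℝ :=
  sInf {I : ℝ | ∃ P : Polynomial ℝ,
    P.natDegree ≤ m - 1 ∧ P.eval x = 1 ∧ I = ∫ t, (P.eval t) ^ 2 ∂μ}


lemma poly_integrable (μ : Measure ℝ) (hmom : ∀ k : ℕ, Integrable (fun t : ℝ => t ^ k) μ)
    (f : Polynomial ℝ) : Integrable (fun t => f.eval t) μ := by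
  simp only [Polynomial.eval_eq_sum_range]
  exact integrable_finsetSum _ fun i _ => (hmom i).const_mul _

lemma quad {μ₁ μ₂ : Measure ℝ} {a₁ b₁ a₂ b₂ : ℝ} {n : ℕ} (hn : 1 ≤ n)
    (ad : Angelesco μ₁ μ₂ a₁ b₁ a₂ b₂ n)
    (hmom : ∀ k : ℕ, Integrable (fun t : ℝ => t ^ k) μ₁)
    (f : Polynomial ℝ) (hf : f.natDegree < 3 * n) :
    ∫ t, f.eval t ∂μ₁ = ∑ k, qweight ad μ₁ k * f.eval (ad.x k) := by
  classical
  set w := Lagrange.nodal Finset.univ ad.x with hw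
  have hwm : w.Monic := Lagrange.nodal_monic
  have hwd : w.natDegree = 2 * n := by simp [hw, Lagrange.natDegree_nodal]
  have hgd : (f /ₘ w).natDegree < n := by
    rw [Polynomial.natDegree_divByMonic _ hwm, hwd]; omega
  have hwe : ∀ t, w.eval t = ∏ i, (t - ad.x i) := fun t => Lagrange.eval_nodal
  have h0 : ∫ t, (w * (f /ₘ w)).eval t ∂μ₁ = 0 := by
    have : ∀ t, (w * (f /ₘ w)).eval t = ∑ k ∈ Finset.range n,
        (f /ₘ w).coeff k * ((∏ i, (t - ad.x i)) * t ^ k) := by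
      intro t
      rw [Polynomial.eval_mul, Polynomial.eval_eq_sum_range' hgd, hwe, Finset.mul_sum]
      exact Finset.sum_congr rfl fun _ _ => by ring
    simp only [this]
    rw [integral_finsetSum]
    · refine Finset.sum_eq_zero fun k hk => ?_
      rw [integral_const_mul, ad.orth1 k (Finset.mem_range.1 hk), mul_zero]
    · intro k _
      have := poly_integrable μ₁ hmom (w * Polynomial.X ^ k)
      simp only [Polynomial.eval_mul, hwe, Polynomial.eval_pow, Polynomial.eval_X] at this
      exact this.const_mul _
  have hr : f %ₘ w = Lagrange.interpolate Finset.univ ad.x (fun k => f.eval (ad.x k)) := by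
    apply Lagrange.eq_interpolate_of_eval_eq
    · exact ad.mono.injective.injOn
    · have := Polynomial.degree_modByMonic_lt f hwm
      rwa [hw, Lagrange.degree_nodal] at this
    · intro i _
      have h := congrArg (Polynomial.eval (ad.x i)) (Polynomial.modByMonic_add_div f w)
      rw [Polynomial.eval_add, Polynomial.eval_mul, hw,
        Lagrange.eval_nodal_at_node (Finset.mem_univ i), zero_mul, add_zero] at h
      exact h
  have hsplit : ∀ t, f.eval t = (f %ₘ w).eval t + (w * (f /ₘ w)).eval t := by
    intro t
    rw [← Polynomial.eval_add, Polynomial.modByMonic_add_div f w]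
  simp only [hsplit]
  rw [integral_add (poly_integrable _ hmom _) (poly_integrable _ hmom _), h0, add_zero]
  simp only [← hsplit]
  simp only [hr, Lagrange.interpolate_apply, Polynomial.eval_finset_sum, Polynomial.eval_mul,
    Polynomial.eval_C]
  rw [integral_finsetSum]
  · refine Finset.sum_congr rfl fun k _ => ?_
    rw [integral_const_mul, mul_comm, qweight]
  · intro k _
    exact (poly_integrable _ hmom _).const_mul _

lemma weight_nonpos {μ₁ μ₂ : Measure ℝ} {a₁ b₁ a₂ b₂ : ℝ} {n : ℕ} (hn : 1 ≤ n)
    (hgap : b₁ ≤ a₂) (hsupp₁ : μ₁ (Set.Icc a₁ b₁)ᶜ = 0)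
    (ad : Angelesco μ₁ μ₂ a₁ b₁ a₂ b₂ n)
    (hmom : ∀ k : ℕ, Integrable (fun t : ℝ => t ^ k) μ₁)
    (k : Fin (2 * n)) (hk : n ≤ (k : ℕ)) (hodd : ((k : ℕ) - n) % 2 = 1) :
    qweight ad μ₁ k ≤ 0 := by
  classical
  set A : Finset (Fin (2 * n)) := Finset.Iio ⟨n, by omega⟩ with hA
  set L : Finset (Fin (2 * n)) := Finset.Ico ⟨n, by omega⟩ k with hL
  set U : Finset (Fin (2 * n)) := Finset.Ioi k with hU
  have cA : A.card = n := by simp [hA]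
  have cL : L.card = (k : ℕ) - n := by simp [hL]
  have cU : U.card = 2 * n - 1 - k := by simp [hU]
  let f : Polynomial ℝ := (∏ i ∈ A, (Polynomial.X - Polynomial.C (ad.x i))) ^ 2 *
    ((∏ i ∈ L, (Polynomial.C (ad.x i) - Polynomial.X)) *
      ∏ i ∈ U, (Polynomial.C (ad.x i) - Polynomial.X))
  have hfe : ∀ t, f.eval t = (∏ i ∈ A, (t - ad.x i)) ^ 2 *
      ((∏ i ∈ L, (ad.x i - t)) * ∏ i ∈ U, (ad.x i - t)) := by
    intro t; simp [f, Polynomial.eval_prod]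
  have hdS : ∀ S : Finset (Fin (2 * n)),
      (∏ i ∈ S, (Polynomial.C (ad.x i) - Polynomial.X)).natDegree ≤ S.card := by
    intro S
    refine (Polynomial.natDegree_prod_le _ _).trans ?_
    refine (Finset.sum_le_card_nsmul _ _ 1 fun i _ => ?_).trans (by simp)
    rw [Polynomial.natDegree_sub, Polynomial.natDegree_X_sub_C]
  have hd : f.natDegree < 3 * n := by
    have h1 : (∏ i ∈ A, (Polynomial.X - Polynomial.C (ad.x i))).natDegree ≤ A.card := by
      rw [Polynomial.natDegree_prod_of_monic _ _ fun i _ => Polynomial.monic_X_sub_C _]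
      simp
    have h2 := hdS L
    have h3 := hdS U
    have h4 : f.natDegree ≤ 2 * A.card + (L.card + U.card) := by
      refine Polynomial.natDegree_mul_le.trans (add_le_add ?_ ?_)
      · exact Polynomial.natDegree_pow_le.trans (by omega)
      · exact Polynomial.natDegree_mul_le.trans (by omega)
    have := k.2
    omega
  have hq := quad hn ad hmom f hd
  rw [Finset.sum_eq_single k] at hq
  · have hpos : 0 ≤ ∫ t, f.eval t ∂μ₁ := by
      apply integral_nonneg_of_ae
      have : ∀ᵐ t ∂μ₁, t ∈ Set.Icc a₁ b₁ := hsupp₁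
      filter_upwards [this] with t ht
      have hx : ∀ i : Fin (2 * n), n ≤ (i : ℕ) → 0 ≤ ad.x i - t := fun i hi => by
        have := (ad.mem2 i hi).1
        linarith [ht.2]
      change 0 ≤ f.eval t
      rw [hfe]
      refine mul_nonneg (sq_nonneg _) (mul_nonneg ?_ ?_)
      · refine Finset.prod_nonneg fun i hi => hx i ?_
        simp only [hL, Finset.mem_Ico, Fin.le_def] at hi
        exact hi.1
      · refine Finset.prod_nonneg fun i hi => hx i ?_
        simp only [hU, Finset.mem_Ioi, Fin.lt_def] at hi
        omega
    have hneg : f.eval (ad.x k) < 0 := by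
      rw [hfe]
      have e1 : (∏ i ∈ A, (ad.x k - ad.x i)) ≠ 0 := by
        refine Finset.prod_ne_zero_iff.2 fun i hi => sub_ne_zero.2 fun h => ?_
        have := ad.mono.injective h
        subst this
        simp only [hA, Finset.mem_Iio, Fin.lt_def] at hi
        omega
      have e2 : 0 < ∏ i ∈ U, (ad.x i - ad.x k) :=
        Finset.prod_pos fun i hi => sub_pos.2 (ad.mono (Finset.mem_Ioi.1 hi))
      have e3 : ∏ i ∈ L, (ad.x i - ad.x k) < 0 := by
        have h1 : ∏ i ∈ L, (ad.x i - ad.x k) = (-1) ^ L.card * ∏ i ∈ L, (ad.x k - ad.x i) := by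
          rw [← Finset.prod_const, ← Finset.prod_mul_distrib]
          exact Finset.prod_congr rfl fun _ _ => by ring
        have h2 : 0 < ∏ i ∈ L, (ad.x k - ad.x i) :=
          Finset.prod_pos fun i hi => sub_pos.2 (ad.mono (Finset.mem_Ico.1 hi).2)
        rw [h1, cL, Odd.neg_one_pow (Nat.odd_iff.2 hodd)]
        linarith
      exact mul_neg_of_pos_of_neg (by positivity) (mul_neg_of_neg_of_pos e3 e2)
    rw [hq] at hpos
    by_contra hc
    push Not at hc
    have := mul_neg_of_pos_of_neg hc hneg
    linarith
  · intro i _ hik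
    rw [hfe]
    by_cases h1 : i ∈ A
    · rw [Finset.prod_eq_zero h1 (sub_self _)]; simp
    by_cases h2 : i ∈ L
    · rw [Finset.prod_eq_zero h2 (sub_self _)]; simp
    have h3 : i ∈ U := by
      simp only [hA, hL, hU, Finset.mem_Iio, Finset.mem_Ico, Finset.mem_Ioi, Fin.lt_def,
        Fin.le_def] at *
      have : (i : ℕ) ≠ k := fun h => hik (Fin.ext h)
      omega
    rw [Finset.prod_eq_zero h3 (sub_self _)]; simp
  · intro h; exact absurd (Finset.mem_univ _) h

/-- **Lower bound of a positive quadrature weight by a Christoffel function:**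
for `1 ≤ j ≤ n`, `λ_{j,2n}^{(1)} ≥ λ_m(x_{j,2n}; μ₁)` with `m = ⌈3n/2⌉`. -/
theorem angelesco_weight_ge_christoffel
    (μ₁ μ₂ : Measure ℝ) [IsFiniteMeasure μ₁] [IsFiniteMeasure μ₂]
    (a₁ b₁ a₂ b₂ : ℝ) (hab₁ : a₁ < b₁) (hgap : b₁ ≤ a₂) (hab₂ : a₂ < b₂)
    (hsupp₁ : μ₁ (Set.Icc a₁ b₁)ᶜ = 0) (hsupp₂ : μ₂ (Set.Icc a₂ b₂)ᶜ = 0)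
    (hinf₁ : ∀ s : Finset ℝ, μ₁ ((s : Set ℝ))ᶜ ≠ 0)
    (hinf₂ : ∀ s : Finset ℝ, μ₂ ((s : Set ℝ))ᶜ ≠ 0)
    (hmom₁ : ∀ k : ℕ, Integrable (fun t : ℝ => t ^ k) μ₁)
    (hmom₂ : ∀ k : ℕ, Integrable (fun t : ℝ => t ^ k) μ₂)
    (n : ℕ) (hn : 1 ≤ n) (ad : Angelesco μ₁ μ₂ a₁ b₁ a₂ b₂ n)
    (j : Fin (2 * n)) (hj : (j : ℕ) < n) :
    christoffel μ₁ ((3 * n + 1) / 2) (ad.x j) ≤ qweight ad μ₁ j := by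
  classical
  set A : Finset (Fin (2 * n)) := (Finset.Iio ⟨n, by omega⟩).erase j with hA
  set E : Finset (Fin (2 * n)) := Finset.univ.filter
    (fun i => n ≤ (i : ℕ) ∧ ((i : ℕ) - n) % 2 = 0) with hE
  have cA : A.card = n - 1 := by
    rw [hA, Finset.card_erase_of_mem (by simpa [Fin.lt_def] using hj)]
    simp
  have cE : E.card ≤ (n + 1) / 2 := by
    have : E.card ≤ (Finset.range ((n + 1) / 2)).card := by
      apply Finset.card_le_card_of_injOn (fun i : Fin (2 * n) => ((i : ℕ) - n) / 2)
      · intro i hi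
        have := i.2
        simp only [hE, Finset.coe_filter, Finset.mem_univ, true_and, Set.mem_setOf_eq] at hi
        simp only [Finset.coe_range, Set.mem_Iio]
        omega
      · intro i hi i' hi' h
        simp only [hE, Finset.coe_filter, Finset.mem_univ, true_and, Set.mem_setOf_eq] at hi hi'
        simp only at h
        apply Fin.ext
        omega
    simpa using this
  let Q : Polynomial ℝ := ∏ i ∈ A ∪ E, (Polynomial.X - Polynomial.C (ad.x i))
  have hQe : ∀ t, Q.eval t = ∏ i ∈ A ∪ E, (t - ad.x i) := by
    intro t; simp [Q, Polynomial.eval_prod]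
  have hQd : Q.natDegree ≤ (3 * n + 1) / 2 - 1 := by
    have h1 : Q.natDegree = (A ∪ E).card := by
      simp only [Q]
      rw [Polynomial.natDegree_prod_of_monic _ _ fun i _ => Polynomial.monic_X_sub_C _]
      simp
    have h2 := Finset.card_union_le A E
    omega
  have hQj : Q.eval (ad.x j) ≠ 0 := by
    rw [hQe]
    refine Finset.prod_ne_zero_iff.2 fun i hi => sub_ne_zero.2 fun h => ?_
    have := ad.mono.injective h
    subst this
    simp only [hA, hE, Finset.mem_union, Finset.mem_erase, Finset.mem_filter] at hi
    rcases hi with hi | hi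
    · exact hi.1 rfl
    · omega
  let P : Polynomial ℝ := Polynomial.C (Q.eval (ad.x j))⁻¹ * Q
  have hPd : P.natDegree ≤ (3 * n + 1) / 2 - 1 := (Polynomial.natDegree_C_mul_le _ _).trans hQd
  have hPj : P.eval (ad.x j) = 1 := by
    simp only [P, Polynomial.eval_mul, Polynomial.eval_C]
    exact inv_mul_cancel₀ hQj
  have hle : christoffel μ₁ ((3 * n + 1) / 2) (ad.x j) ≤ ∫ t, (P.eval t) ^ 2 ∂μ₁ := by
    refine csInf_le ⟨0, ?_⟩ ⟨P, hPd, hPj, rfl⟩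
    rintro _ ⟨R, _, _, rfl⟩
    exact integral_nonneg fun t => sq_nonneg _
  refine hle.trans ?_
  have hq := quad hn ad hmom₁ (P ^ 2)
    (lt_of_le_of_lt Polynomial.natDegree_pow_le (by omega))
  simp only [Polynomial.eval_pow] at hq
  rw [hq]
  calc _ ≤ ∑ k, (if k = j then qweight ad μ₁ j else 0) := by
        refine Finset.sum_le_sum fun k _ => ?_
        split_ifs with h
        · rw [h, hPj]; simp
        by_cases hm : k ∈ A ∪ E
        · have : P.eval (ad.x k) = 0 := by
            simp only [P, Polynomial.eval_mul, hQe (ad.x k)]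
            rw [Finset.prod_eq_zero hm (sub_self _), mul_zero]
          rw [this]; simp
        · simp only [hA, hE, Finset.mem_union, Finset.mem_erase, Finset.mem_filter,
            Finset.mem_Iio, Fin.lt_def, Finset.mem_univ, true_and, not_or, not_and] at hm
          have h1 := hm.1 h
          have h2 := hm.2 (by omega)
          exact mul_nonpos_of_nonpos_of_nonneg
            (weight_nonpos hn hgap hsupp₁ ad hmom₁ k (by omega) (by omega)) (sq_nonneg _)
    _ = qweight ad μ₁ j := by simp
end
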